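/- Let m, n be positive integers and A ∈ M_{n,m}(𝔽_q((z⁻¹))) be non-degenerate. Then for almost all θ ∈ 𝔽_q((z⁻¹))ⁿ with respect to the Haar measure on the locally compact additive group 𝔽_q((z⁻¹))ⁿ, one has the equalities ω(A, θ) = 1/ω̂(Aᵀ) and ω̂(A, θ) = 1/ω(Aᵀ). -/

import Mathlib

/-!
Common setup: the field `𝔽_q((z⁻¹))` of formal power series over a finite field `K` of
cardinality `q`, modeled as the field `FF K` of formal Laurent series in `t = z⁻¹`,
together with its non-Archimedean norm, the embedding of the polynomial ring `𝔽_q[z]`,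
distances to polynomial (vectors), Diophantine exponents, `Bad` sets, continued fractions
and best approximation sequences.
-/

open scoped Classical ENNReal NNReal
open Filter

noncomputable section

namespace FPSDA

variable (K : Type*) [Field K] [Fintype K]

/-- The field `𝔽_q((z⁻¹))` of formal power series in `z⁻¹` over the finite field `K = 𝔽_q`,
modeled as the field of formal Laurent series in the variable `t = z⁻¹`. -/
def FF : Type _ := LaurentSeries K

instance : Field (FF K) := inferInstanceAs (Field (LaurentSeries K))

variable {K}

/-- The identity map, viewing an element of `𝔽_q((z⁻¹))` as a Laurent series in `t = z⁻¹`. -/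
def toL (x : FF K) : LaurentSeries K := x

@[simp] lemma toL_zero : toL (0 : FF K) = 0 := rfl
@[simp] lemma toL_add (x y : FF K) : toL (x + y) = toL x + toL y := rfl
@[simp] lemma toL_neg (x : FF K) : toL (-x) = -toL x := rfl
@[simp] lemma toL_sub (x y : FF K) : toL (x - y) = toL x - toL y := rfl
lemma toL_eq_zero {x : FF K} : toL x = 0 ↔ x = 0 := Iff.rfl

/-- The norm `‖x‖ = q ^ (deg x)` on `𝔽_q((z⁻¹))`, where
`deg x = - (order of x as a Laurent series in z⁻¹)`; `‖0‖ = 0`. -/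
def fnorm (x : FF K) : ℝ :=
  if toL x = 0 then 0 else (Fintype.card K : ℝ) ^ (-(toL x).order)

lemma one_le_q : (1 : ℝ) ≤ (Fintype.card K : ℝ) := by
  exact_mod_cast Fintype.card_pos

lemma fnorm_nonneg (x : FF K) : 0 ≤ fnorm x := by
  unfold fnorm
  split_ifs
  · exact le_refl 0
  · exact zpow_nonneg (by positivity) _

lemma fnorm_eq_zero {x : FF K} : fnorm x = 0 ↔ x = 0 := by
  unfold fnorm
  split_ifs with h
  · exact ⟨fun _ => toL_eq_zero.mp h, fun _ => rfl⟩
  · constructor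
    · intro hc
      exact absurd hc (zpow_ne_zero _ (by
        have h0 : (0:ℝ) < (Fintype.card K : ℝ) := by positivity
        exact ne_of_gt h0))
    · intro hc
      exact absurd (toL_eq_zero.mpr hc) h

lemma fnorm_neg (x : FF K) : fnorm (-x) = fnorm x := by
  unfold fnorm
  rw [toL_neg]
  simp [neg_eq_zero, HahnSeries.order_neg]

lemma fnorm_add_le (x y : FF K) : fnorm (x + y) ≤ max (fnorm x) (fnorm y) := by
  by_cases hxy : x + y = 0
  · rw [fnorm_eq_zero.mpr hxy]
    exact le_max_of_le_left (fnorm_nonneg x)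
  by_cases hx : x = 0
  · rw [hx, zero_add]
    exact le_max_right _ _
  by_cases hy : y = 0
  · rw [hy, add_zero]
    exact le_max_left _ _
  have horder : min (toL x).order (toL y).order ≤ (toL (x + y)).order := by
    rw [toL_add]
    exact HahnSeries.min_order_le_order_add (show toL x + toL y ≠ 0 from hxy)
  have h1 : fnorm (x + y) = (Fintype.card K : ℝ) ^ (-(toL (x+y)).order) := by
    unfold fnorm
    rw [if_neg (show toL (x + y) ≠ 0 from hxy)]
  rcases le_total (toL x).order (toL y).order with h | h
  · have h2 : (toL x).order ≤ (toL (x+y)).order := le_trans (by simp [min_eq_left h]) horder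
    refine le_max_of_le_left ?_
    rw [h1]
    unfold fnorm
    rw [if_neg (show toL x ≠ 0 from hx)]
    exact zpow_le_zpow_right₀ one_le_q (by omega)
  · have h2 : (toL y).order ≤ (toL (x+y)).order := le_trans (by simp [min_eq_right h]) horder
    refine le_max_of_le_right ?_
    rw [h1]
    unfold fnorm
    rw [if_neg (show toL y ≠ 0 from hy)]
    exact zpow_le_zpow_right₀ one_le_q (by omega)

/-- The (ultra)metric `dist x y = ‖x - y‖` on `𝔽_q((z⁻¹))`. -/
instance : MetricSpace (FF K) where
  dist x y := fnorm (x - y)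
  dist_self x := by
    show fnorm (x - x) = 0
    rw [sub_self]
    exact fnorm_eq_zero.mpr rfl
  dist_comm x y := by
    show fnorm (x - y) = fnorm (y - x)
    have h : x - y = -(y - x) := by ring
    rw [h, fnorm_neg]
  dist_triangle x y z := by
    show fnorm (x - z) ≤ fnorm (x - y) + fnorm (y - z)
    have h : x - z = (x - y) + (y - z) := by ring
    calc fnorm (x - z) ≤ max (fnorm (x - y)) (fnorm (y - z)) := by
          rw [h]; exact fnorm_add_le _ _
      _ ≤ fnorm (x - y) + fnorm (y - z) :=
        max_le (le_add_of_nonneg_right (fnorm_nonneg _)) (le_add_of_nonneg_left (fnorm_nonneg _))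
  eq_of_dist_eq_zero := by
    intro x y h
    have h' : x - y = 0 := fnorm_eq_zero.mp h
    exact sub_eq_zero.mp h'

instance : MeasurableSpace (FF K) := borel _
instance : BorelSpace (FF K) := ⟨rfl⟩

/-- The canonical embedding of the polynomial ring `𝔽_q[z]` into `𝔽_q((z⁻¹))`:
the variable `z` is sent to `t⁻¹ = single (-1) 1`. -/
def polyF (P : Polynomial K) : FF K :=
  Polynomial.aeval (HahnSeries.single (-1 : ℤ) (1 : K)) P

/-- Supremum norm of a vector with entries in `𝔽_q((z⁻¹))`. -/
def vnorm {ι : Type*} [Fintype ι] (v : ι → FF K) : ℝ := ⨆ i, fnorm (v i)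

/-- `⟨v⟩`, the distance from the vector `v` to the nearest polynomial vector. -/
def vdist {ι : Type*} [Fintype ι] (v : ι → FF K) : ℝ :=
  ⨅ y : ι → Polynomial K, vnorm (fun i => v i - polyF (y i))

/-- `⟨x⟩`, the distance from the scalar `x` to the nearest polynomial. -/
def sdist (x : FF K) : ℝ := ⨅ y : Polynomial K, fnorm (x - polyF y)

/-- The fractional part `{x} = Σ_{i ≥ 1} a_i z^{-i}` of `x = Σ_i a_i z^{-i}`. -/
def fracPart (x : FF K) : FF K :=
  (⟨fun i => if 1 ≤ i then (toL x).coeff i else 0, (toL x).isPWO_support'.mono (by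
      intro i hi
      by_cases h : (1:ℤ) ≤ i
      · simpa [Function.mem_support, h] using hi
      · simp [Function.mem_support, h] at hi)⟩ : LaurentSeries K)

/-- The integer part `[x] = Σ_{i ≤ 0} a_i z^{-i}` of `x = Σ_i a_i z^{-i}`, as a polynomial
in `z`. -/
def intPoly (x : FF K) : Polynomial K :=
  ∑ i ∈ Finset.range ((-(toL x).order).toNat + 1),
    Polynomial.monomial i ((toL x).coeff (-(i : ℤ)))

/-- `x ∈ 𝔽_q((z⁻¹))` is irrational if it is not in `𝔽_q(z)`, i.e. is not a ratio of two
polynomials in `z`. -/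
def FIrrational (x : FF K) : Prop :=
  ∀ P Q : Polynomial K, Q ≠ 0 → x * polyF Q ≠ polyF P

section Exponents

variable {m n : ℕ}

/-- The norm `‖x‖ = max_j ‖x_j‖` of a polynomial vector `x`. -/
def pnorm {ι : Type*} [Fintype ι] (x : ι → Polynomial K) : ℝ :=
  vnorm (fun i => (polyF (x i) : FF K))

/-- The system `⟨A x - θ⟩ ≤ H^{-ω}`, `‖x‖ ≤ H` has a polynomial solution `x`. -/
def Solv (A : Matrix (Fin n) (Fin m) (FF K)) (θ : Fin n → FF K) (ω H : ℝ) : Prop :=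
  ∃ x : Fin m → Polynomial K,
    vdist (A.mulVec (fun j => polyF (x j)) - θ) ≤ H ^ (-ω) ∧ pnorm x ≤ H

/-- The system `⟨A x⟩ ≤ H^{-ω}`, `‖x‖ ≤ H` has a nonzero polynomial solution `x`. -/
def SolvHom (A : Matrix (Fin n) (Fin m) (FF K)) (ω H : ℝ) : Prop :=
  ∃ x : Fin m → Polynomial K, x ≠ 0 ∧
    vdist (A.mulVec (fun j => polyF (x j))) ≤ H ^ (-ω) ∧ pnorm x ≤ H

/-- The inhomogeneous exponent `ω(A, θ)`: the supremum (in `[0,∞]`) of all `ω` such that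
for arbitrarily large `H` the system `⟨A x - θ⟩ ≤ H^{-ω}`, `‖x‖ ≤ H` has a polynomial
solution. -/
def omegaInhom (A : Matrix (Fin n) (Fin m) (FF K)) (θ : Fin n → FF K) : ℝ≥0∞ :=
  ⨆ (ω : ℝ) (_ : ∀ H₀ : ℝ, ∃ H : ℝ, H₀ ≤ H ∧ Solv A θ ω H), ENNReal.ofReal ω

/-- The uniform inhomogeneous exponent `ω̂(A, θ)`: as `ω(A, θ)`, but with a solution for
all sufficiently large `H`. -/
def omegaHatInhom (A : Matrix (Fin n) (Fin m) (FF K)) (θ : Fin n → FF K) : ℝ≥0∞ :=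
  ⨆ (ω : ℝ) (_ : ∃ H₀ : ℝ, ∀ H : ℝ, H₀ ≤ H → Solv A θ ω H), ENNReal.ofReal ω

/-- The homogeneous exponent `ω(A)`. -/
def omegaHom (A : Matrix (Fin n) (Fin m) (FF K)) : ℝ≥0∞ :=
  ⨆ (ω : ℝ) (_ : ∀ H₀ : ℝ, ∃ H : ℝ, H₀ ≤ H ∧ SolvHom A ω H), ENNReal.ofReal ω

/-- The uniform homogeneous exponent `ω̂(A)`. -/
def omegaHatHom (A : Matrix (Fin n) (Fin m) (FF K)) : ℝ≥0∞ :=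
  ⨆ (ω : ℝ) (_ : ∃ H₀ : ℝ, ∀ H : ℝ, H₀ ≤ H → SolvHom A ω H), ENNReal.ofReal ω

/-- `A` is non-degenerate: the `𝔽_q[z]`-module `Aᵀ 𝔽_q[z]ⁿ + 𝔽_q[z]^m ⊆ 𝔽_q((z⁻¹))^m` has
rank `m + n` over `𝔽_q[z]`, i.e. its `m + n` natural generators are linearly independent
over `𝔽_q[z]`; equivalently, no nonzero polynomial vector `u` makes `Aᵀ u` a polynomial
vector. -/
def Nondegenerate (A : Matrix (Fin n) (Fin m) (FF K)) : Prop :=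
  ∀ u : Fin n → Polynomial K,
    (∃ v : Fin m → Polynomial K,
      A.transpose.mulVec (fun i => polyF (u i)) = fun j => polyF (v j)) → u = 0

/-- `liminf_{x ∈ 𝔽_q[z]^m, ‖x‖ → ∞} ‖x‖^{m/n} ⟨A x - θ⟩`, computed in `[0, ∞]`. -/
def badLiminf (A : Matrix (Fin n) (Fin m) (FF K)) (θ : Fin n → FF K) : ℝ≥0∞ :=
  Filter.liminf
    (fun x : Fin m → Polynomial K =>
      ENNReal.ofReal ((pnorm x) ^ ((m : ℝ) / (n : ℝ)) *
        vdist (A.mulVec (fun j => polyF (x j)) - θ)))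
    (Filter.comap (fun x : Fin m → Polynomial K => pnorm x) Filter.atTop)

/-- The set `Bad^ε(A)` of `θ` in the unit polydisc `𝕀ⁿ` with
`liminf_{‖x‖ → ∞} ‖x‖^{m/n} ⟨A x - θ⟩ ≥ ε`. -/
def Bad (A : Matrix (Fin n) (Fin m) (FF K)) (ε : ℝ) : Set (Fin n → FF K) :=
  {θ | (∀ i, fnorm (θ i) < 1) ∧ ENNReal.ofReal ε ≤ badLiminf A θ}

/-- The set `Bad(A) = ⋃_{ε > 0} Bad^ε(A)`. -/
def BadAll (A : Matrix (Fin n) (Fin m) (FF K)) : Set (Fin n → FF K) :=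
  ⋃ (ε : ℝ) (_ : 0 < ε), Bad A ε

/-- `M(y) = ⟨Aᵀ y⟩` for a polynomial vector `y`. -/
def Mfun (A : Matrix (Fin n) (Fin m) (FF K)) (y : Fin n → Polynomial K) : ℝ :=
  vdist (A.transpose.mulVec (fun i => polyF (y i)))

/-- `y 1, y 2, …` is a sequence of best approximations related to `Aᵀ`:
`1 = Y_1 < Y_2 < ⋯`, `M_1 > M_2 > ⋯`, and `M(x) ≥ M_k` for every nonzero polynomial
vector `x` with `‖x‖ < Y_{k+1}` (the value `y 0` is irrelevant). -/
def IsBestApproxSeq (A : Matrix (Fin n) (Fin m) (FF K))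
    (y : ℕ → Fin n → Polynomial K) : Prop :=
  pnorm (y 1) = 1 ∧
  (∀ k, 1 ≤ k → pnorm (y k) < pnorm (y (k + 1))) ∧
  (∀ k, 1 ≤ k → Mfun A (y (k + 1)) < Mfun A (y k)) ∧
  (∀ k, 1 ≤ k → ∀ x : Fin n → Polynomial K, x ≠ 0 → pnorm x < pnorm (y (k + 1)) →
    Mfun A (y k) ≤ Mfun A x)

end Exponents

section Scalar

/-- The system `⟨ξ x - θ⟩ ≤ H^{-ω}`, `‖x‖ ≤ H` has a polynomial solution `x`. -/
def sSolv (ξ θ : FF K) (ω H : ℝ) : Prop :=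
  ∃ x : Polynomial K, sdist (ξ * polyF x - θ) ≤ H ^ (-ω) ∧ fnorm (polyF x) ≤ H

/-- The scalar inhomogeneous exponent `ω((ξ), θ)`. -/
def somegaInhom (ξ θ : FF K) : ℝ≥0∞ :=
  ⨆ (ω : ℝ) (_ : ∀ H₀ : ℝ, ∃ H : ℝ, H₀ ≤ H ∧ sSolv ξ θ ω H), ENNReal.ofReal ω

/-- The scalar uniform inhomogeneous exponent `ω̂((ξ), θ)`. -/
def somegaHatInhom (ξ θ : FF K) : ℝ≥0∞ :=
  ⨆ (ω : ℝ) (_ : ∃ H₀ : ℝ, ∀ H : ℝ, H₀ ≤ H → sSolv ξ θ ω H), ENNReal.ofReal ω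

/-- The scalar homogeneous exponent `ω((ξ))`. -/
def somegaHom (ξ : FF K) : ℝ≥0∞ :=
  ⨆ (ω : ℝ) (_ : ∀ H₀ : ℝ, ∃ H : ℝ, H₀ ≤ H ∧ ∃ x : Polynomial K, x ≠ 0 ∧
      sdist (ξ * polyF x) ≤ H ^ (-ω) ∧ fnorm (polyF x) ≤ H), ENNReal.ofReal ω

/-- `liminf_{x ∈ 𝔽_q[z], ‖x‖ → ∞} ‖x‖ ⟨α x - θ⟩`, computed in `[0, ∞]`. -/
def sBadLiminf (α θ : FF K) : ℝ≥0∞ :=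
  Filter.liminf
    (fun x : Polynomial K => ENNReal.ofReal (fnorm (polyF x) * sdist (α * polyF x - θ)))
    (Filter.comap (fun x : Polynomial K => fnorm (polyF x)) Filter.atTop)

/-- The set `Bad^ε(α)` of `θ ∈ 𝕀` with `liminf_{‖x‖ → ∞} ‖x‖ ⟨α x - θ⟩ ≥ ε`. -/
def sBad (α : FF K) (ε : ℝ) : Set (FF K) :=
  {θ | fnorm θ < 1 ∧ ENNReal.ofReal ε ≤ sBadLiminf α θ}

end Scalar

section CF

/-- The Gauss map `T x = 1/x - [1/x]` on `𝔽_q((z⁻¹))`. -/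
def gaussMap (x : FF K) : FF K := fracPart x⁻¹

/-- `pquot α k` is the `(k+1)`-st partial quotient `A_{k+1} = [1 / T^k α]` of the
continued fraction expansion of `α`. -/
def pquot (α : FF K) (k : ℕ) : Polynomial K := intPoly ((gaussMap^[k] α)⁻¹)

/-- `cfQ α k` is the denominator `Q_k` of the `k`-th convergent of the continued fraction
expansion of `α`: `Q_0 = 1`, `Q_1 = A_1`, `Q_{k+2} = A_{k+2} Q_{k+1} + Q_k`. -/
def cfQ (α : FF K) : ℕ → Polynomial K
  | 0 => 1
  | 1 => pquot α 0
  | (k + 2) => pquot α (k + 1) * cfQ α (k + 1) + cfQ α k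

/-- `α` is singular on average: for every `c > 0` the proportion of `l ∈ {1, …, N}` for
which `‖{Q α}‖ ≤ c 2^{-l}` has a solution `Q ∈ 𝔽_q[z]` with `0 < ‖Q‖ ≤ 2^l` tends to `1`
as `N → ∞`. -/
def SingularOnAverage (α : FF K) : Prop :=
  ∀ c : ℝ, 0 < c →
    Filter.Tendsto
      (fun N : ℕ =>
        (((Finset.Icc 1 N).filter (fun l : ℕ =>
            ∃ Q : Polynomial K, Q ≠ 0 ∧ fnorm (polyF Q) ≤ 2 ^ l ∧
              fnorm (fracPart (polyF Q * α)) ≤ c / 2 ^ l)).card : ℝ) / (N : ℝ))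
      Filter.atTop (nhds 1)

end CF

end FPSDA

open FPSDA MeasureTheory

/-!
For polynomial vectors `x`, `y` one has `y · θ ≡ x · Aᵀy - y · (Ax - θ)` modulo `𝔽_q[z]`, hence
`⟨y · θ⟩ ≤ max (‖x‖ ⟨Aᵀy⟩) (‖y‖ ⟨Ax - θ⟩)`.

Lower bounds, for every `θ`: the unknown coefficients of an `x` with `‖x‖ < q ^ b` and
`⟨Ax - θ⟩ < q ^ (-a)` solve a linear system over `𝔽_q` whose matrix is a block Hankel matrix of
`A`. The transpose of that matrix is a block Hankel matrix of `Aᵀ`, so either the system is solvable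
for every `θ`, or there is some `y ≠ 0` with `‖y‖ < q ^ a` and `⟨Aᵀy⟩ < q ^ (-b)`.

Upper bounds, for almost every `θ`: good approximations `x` and `y` force `⟨y · θ⟩` to be small, and
for `y ≠ 0` the part of a unit ball on which `⟨y · θ⟩ < r` has measure at most `q * r` times that of
the ball, so the Borel–Cantelli lemma applies along a sequence of `y` with geometrically growing
heights.
-/

namespace FPSDA

lemma mulVec_surjective_of_transpose_mulVec_eq_zero {F m n : Type*} [Field F] [Fintype m]
    [Fintype n] {M : Matrix m n F} (hM : ∀ y, M.transpose.mulVec y = 0 → y = 0) :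
    Function.Surjective M.mulVec := by
  have hrows : LinearIndependent F M.row := by
    rw [← Matrix.vecMul_injective_iff, ← Matrix.coe_vecMulLinear, injective_iff_map_eq_zero]
    exact fun y hy => hM y (by rwa [Matrix.mulVec_transpose])
  have hrange : LinearMap.range M.mulVecLin = ⊤ :=
    Submodule.eq_top_of_finrank_eq
      (hrows.rank_matrix.trans (Module.finrank_fintype_fun_eq_card F).symm)
  exact LinearMap.range_eq_top.1 hrange

instance {R : Type*} [Semiring R] [Countable R] : Countable (Polynomial R) :=
  Cardinal.mk_le_aleph0_iff.1
    (Polynomial.cardinalMk_le_max.trans (max_le (Cardinal.mk_le_aleph0 (α := R)) le_rfl))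

/-- The exponent of an approximation property `S`: the supremum in `[0, ∞]` of the reals `ω` for
which `S ω` holds, nonpositive `ω` contributing `0`. The four exponents `ω`, `ω̂` are instances. -/
def exponent (S : ℝ → Prop) : ℝ≥0∞ := ⨆ (ω : ℝ) (_ : S ω), ENNReal.ofReal ω

lemma ofReal_le_exponent {S : ℝ → Prop} {ω : ℝ} (hω : S ω) : ENNReal.ofReal ω ≤ exponent S :=
  le_iSup₂ (f := fun (ω : ℝ) (_ : S ω) => ENNReal.ofReal ω) ω hω

lemma lt_exponent_iff {S : ℝ → Prop} {c : ℝ≥0∞} :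
    c < exponent S ↔ ∃ ω, S ω ∧ c < ENNReal.ofReal ω := by
  simp only [exponent, lt_iSup_iff, exists_prop]

lemma inv_exponent_le {S T : ℝ → Prop} (hST : ∀ ω, 0 < ω → ¬S ω → T ω⁻¹) :
    (exponent S)⁻¹ ≤ exponent T := by
  refine le_of_forall_lt fun c hc => ?_
  obtain ⟨ω, -, hSω, hωc⟩ := ENNReal.lt_iff_exists_real_btwn.1 (ENNReal.lt_inv_iff_lt_inv.1 hc)
  have hω0 : 0 < ω := ENNReal.ofReal_pos.1 (pos_of_gt hSω)
  calc c < (ENNReal.ofReal ω)⁻¹ := ENNReal.lt_inv_iff_lt_inv.1 hωc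
    _ = ENNReal.ofReal ω⁻¹ := (ENNReal.ofReal_inv_of_pos hω0).symm
    _ ≤ exponent T := ofReal_le_exponent (hST ω hω0 fun hS => (ofReal_le_exponent hS).not_gt hSω)

lemma ae_exponent_le_inv_exponent {X : Type*} [MeasurableSpace X] {μ : Measure X} {S : ℝ → Prop}
    {T : X → ℝ → Prop} (hT : ∀ x, Antitone (T x))
    (hST : ∀ ω τ, 0 < τ → τ⁻¹ < ω → S ω → ∀ᵐ x ∂μ, ¬T x τ) :
    ∀ᵐ x ∂μ, exponent (T x) ≤ (exponent S)⁻¹ := by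
  have hrat : ∀ᵐ x ∂μ, ∀ r : ℚ, (exponent S)⁻¹ < ENNReal.ofReal r → ¬T x r := by
    refine ae_all_iff.2 fun r => ?_
    by_cases hr : (exponent S)⁻¹ < ENNReal.ofReal r
    · have hr0 : (0 : ℝ) < r := ENNReal.ofReal_pos.1 (pos_of_gt hr)
      obtain ⟨ω, hω, hrω⟩ := lt_exponent_iff.1 (ENNReal.inv_lt_iff_inv_lt.1 hr)
      rw [← ENNReal.ofReal_inv_of_pos hr0] at hrω
      filter_upwards [hST ω r hr0 (ENNReal.ofReal_mono.reflect_lt hrω) hω] with x hx _ using hx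
    · exact Eventually.of_forall fun x hr' => absurd hr' hr
  filter_upwards [hrat] with x hx
  by_contra! hlt
  obtain ⟨τ, hτ, hSτ⟩ := lt_exponent_iff.1 hlt
  obtain ⟨r, -, hSr, hrτ⟩ := ENNReal.lt_iff_exists_rat_btwn.1 hSτ
  exact hx r hSr (hT x (ENNReal.ofReal_mono.reflect_lt hrτ).le hτ)

lemma summable_rpow_neg_of_pow_le {b δ : ℝ} (hb : 1 < b) (hδ : 0 < δ) {Y : ℕ → ℝ}
    (hY : ∀ k, b ^ k ≤ Y k) : Summable fun k => Y k ^ (-δ) := by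
  have hb0 : 0 < b := zero_lt_one.trans hb
  have hY0 (k : ℕ) : 0 < Y k := (pow_pos hb0 k).trans_le (hY k)
  refine Summable.of_nonneg_of_le (fun k => (Real.rpow_pos_of_pos (hY0 k) _).le) (fun k => ?_)
    (summable_geometric_of_lt_one (by positivity)
      (Real.rpow_lt_one_of_one_lt_of_neg hb (neg_lt_zero.2 hδ)))
  rw [← Real.rpow_mul_natCast hb0.le, mul_comm, Real.rpow_natCast_mul hb0.le]
  exact Real.rpow_le_rpow_of_nonpos (pow_pos hb0 k) (hY k) (neg_nonpos.2 hδ.le)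

open Metric in
lemma ae_eventually_notMem_of_tsum_measure_ball_inter_ne_top {X : Type*} [PseudoMetricSpace X]
    [SecondCountableTopology X] [MeasurableSpace X] {μ : Measure X} {S : ℕ → Set X} {r : ℝ}
    (hr : 0 < r) (hS : ∀ p, ∑' k, μ (ball p r ∩ S k) ≠ ∞) : ∀ᵐ x ∂μ, ∀ᶠ k in atTop, x ∉ S k := by
  obtain ⟨s, hs, hcover⟩ := TopologicalSpace.countable_cover_nhds fun p : X => ball_mem_nhds p hr
  filter_upwards [(ae_ball_iff hs).2 fun p _ => ae_eventually_notMem (hS p)] with x hx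
  obtain ⟨p, hp, hxp⟩ := Set.mem_iUnion₂.1 (hcover.ge (Set.mem_univ x))
  exact (hx p hp).mono fun k hk hxk => hk ⟨hxp, hxk⟩

lemma card_mul_measure_le_of_pairwise_disjoint {G ι : Type*} [AddGroup G] [MeasurableSpace G]
    [MeasurableAdd G] (μ : Measure G) [μ.IsAddLeftInvariant] [Fintype ι] {g : ι → G}
    {S T : Set G} (hT : MeasurableSet T) (hsub : ∀ i, (g i + ·) ⁻¹' T ⊆ S)
    (hdisjoint : Pairwise fun i j => Disjoint ((g i + ·) ⁻¹' T) ((g j + ·) ⁻¹' T)) :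
    Fintype.card ι * μ T ≤ μ S := by
  calc Fintype.card ι * μ T = ∑ i, μ ((g i + ·) ⁻¹' T) := by
        simp only [measure_preimage_add, Finset.sum_const, Finset.card_univ, nsmul_eq_mul]
    _ = μ (⋃ i, (g i + ·) ⁻¹' T) := by
        rw [measure_iUnion hdisjoint fun i => measurable_const_add (g i) hT, tsum_fintype]
    _ ≤ μ S := measure_mono (Set.iUnion_subset hsub)

open Metric in
lemma measure_ball_eq_measure_ball_zero {E : Type*} [SeminormedAddCommGroup E]
    [MeasurableSpace E] [MeasurableAdd E] (μ : Measure E) [μ.IsAddLeftInvariant] (p : E) (r : ℝ) :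
    μ (ball p r) = μ (ball 0 r) := by
  rw [← measure_preimage_add μ p, preimage_add_ball, sub_self]

section

variable {K : Type*} [Field K]

/-- The coefficient of `z⁻ᵏ` in an element of `𝔽_q((z⁻¹))`, as an additive map. -/
def coeff (k : ℤ) : FF K →+ K where
  toFun x := (toL x).coeff k
  map_zero' := HahnSeries.coeff_zero
  map_add' _ _ := HahnSeries.coeff_add

lemma polyF_zero : polyF (0 : Polynomial K) = 0 :=
  map_zero (Polynomial.aeval (HahnSeries.single (-1 : ℤ) (1 : K)))

lemma polyF_sub (P Q : Polynomial K) : polyF (P - Q) = polyF P - polyF Q :=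
  map_sub (Polynomial.aeval (HahnSeries.single (-1 : ℤ) (1 : K))) P Q

lemma polyF_mul (P Q : Polynomial K) : polyF (P * Q) = polyF P * polyF Q :=
  map_mul (Polynomial.aeval (HahnSeries.single (-1 : ℤ) (1 : K))) P Q

lemma polyF_sum {ι : Type*} (s : Finset ι) (P : ι → Polynomial K) :
    polyF (∑ i ∈ s, P i) = ∑ i ∈ s, polyF (P i) :=
  map_sum (Polynomial.aeval (HahnSeries.single (-1 : ℤ) (1 : K))) P s

lemma toL_polyF_monomial (l : ℕ) (a : K) :
    toL (polyF (Polynomial.monomial l a)) = HahnSeries.single (-(l : ℤ)) a := by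
  change Polynomial.aeval (HahnSeries.single (-1 : ℤ) (1 : K)) _ = _
  have halgebraMap : algebraMap K (HahnSeries ℤ K) a = HahnSeries.single (0 : ℤ) a := by
    simp [HahnSeries.algebraMap_apply']
  rw [Polynomial.aeval_monomial, HahnSeries.single_pow]
  refine (congrArg (· * _) halgebraMap).trans ?_
  rw [HahnSeries.single_mul_single]
  simp

lemma coeff_polyF_mul (k : ℤ) (P : Polynomial K) (x : FF K) :
    coeff k (polyF P * x) = P.sum fun l a => a * coeff (k + l) x := by
  have hmonomial (l : ℕ) (a : K) :
      coeff k (polyF (Polynomial.monomial l a) * x) = a * coeff (k + l) x := by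
    change (toL (polyF (Polynomial.monomial l a)) * toL x).coeff k = a * (toL x).coeff (k + l)
    rw [toL_polyF_monomial, HahnSeries.coeff_single_mul, sub_neg_eq_add]
  conv_lhs => rw [← P.sum_monomial_eq, Polynomial.sum_def]
  simp only [polyF_sum, Finset.sum_mul, map_sum, hmonomial, Polynomial.sum_def]

lemma coeff_polyF (k : ℤ) (P : Polynomial K) :
    coeff k (polyF P) = P.sum fun l a => if k + l = 0 then a else 0 := by
  have hone (j : ℤ) : coeff j (1 : FF K) = if j = 0 then 1 else 0 := by
    change (1 : LaurentSeries K).coeff j = _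
    simp [HahnSeries.coeff_one]
  simpa only [mul_one, hone, mul_ite, mul_zero] using coeff_polyF_mul k P 1

lemma coeff_polyF_of_pos {k : ℤ} (hk : 0 < k) (P : Polynomial K) : coeff k (polyF P) = 0 := by
  rw [coeff_polyF]
  exact Finset.sum_eq_zero fun l _ => if_neg (by omega)

lemma coeff_neg_polyF (n : ℕ) (P : Polynomial K) : coeff (-n) (polyF P) = P.coeff n := by
  simp [coeff_polyF, Polynomial.sum_def, neg_add_eq_zero, eq_comm]

lemma polyF_X_ne_zero : polyF (Polynomial.X : Polynomial K) ≠ 0 := by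
  refine ne_zero_of_map (f := coeff (-(1 : ℕ))) ?_
  rw [coeff_neg_polyF, Polynomial.coeff_X_one]
  exact one_ne_zero

lemma coeff_polyF_intPoly {k : ℤ} (hk : k ≤ 0) (x : FF K) :
    coeff k (polyF (intPoly x)) = coeff k x := by
  obtain ⟨l, rfl⟩ : ∃ l : ℕ, k = -l := ⟨k.natAbs, by omega⟩
  rw [coeff_neg_polyF, intPoly, Polynomial.finsetSum_coeff]
  simp only [Polynomial.coeff_monomial, Finset.sum_ite_eq', Finset.mem_range]
  split_ifs with hl
  · rfl
  · exact (HahnSeries.coeff_eq_zero_of_lt_order (x := toL x) (by omega)).symm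

/-- The block Hankel matrix of the coefficients of `z⁻⁽ᵏ⁺ˡ⁺¹⁾`, `k < a`, `l < b`, in the entries
of `A`. It expresses the first `a` fractional coefficients of `A x` in terms of the coefficients of
a polynomial vector `x` with entries of degree less than `b`. -/
def hankel {ι κ : Type*} (A : Matrix ι κ (FF K)) (a b : ℕ) : Matrix (ι × Fin a) (κ × Fin b) K :=
  Matrix.of fun s t => coeff (s.2 + t.2 + 1) (A s.1 t.1)

lemma hankel_transpose {ι κ : Type*} (A : Matrix ι κ (FF K)) (a b : ℕ) :
    (hankel A a b).transpose = hankel A.transpose b a := by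
  ext s t
  rw [Matrix.transpose_apply, hankel, hankel, Matrix.of_apply, Matrix.of_apply,
    add_comm (s.2 : ℤ), Matrix.transpose_apply]

/-- The polynomial vector with entries of degree less than `b` whose coefficients are `x`. -/
def ofCoeffs {κ : Type*} {b : ℕ} (x : κ × Fin b → K) (j : κ) : Polynomial K :=
  Polynomial.ofFn b fun l => x (j, l)

lemma ofCoeffs_coeff {κ : Type*} {b : ℕ} (x : κ × Fin b → K) (j : κ) (l : Fin b) :
    (ofCoeffs x j).coeff l = x (j, l) :=
  Polynomial.ofFn_coeff_eq_val_of_lt _ l.2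

lemma ofCoeffs_ne_zero {κ : Type*} {b : ℕ} {x : κ × Fin b → K} (hx : x ≠ 0) :
    ofCoeffs x ≠ 0 := by
  contrapose! hx
  ext ⟨j, l⟩
  rw [← ofCoeffs_coeff x, hx]
  simp

lemma hankel_mulVec_apply {ι κ : Type*} [Fintype κ] (A : Matrix ι κ (FF K)) {a b : ℕ}
    (x : κ × Fin b → K) (i : ι) (k : Fin a) :
    (hankel A a b).mulVec x (i, k) =
      coeff (k + 1) (A.mulVec (fun j => polyF (ofCoeffs x j)) i) := by
  have hentry (j : κ) : coeff (k + 1) (A i j * polyF (ofCoeffs x j)) =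
      ∑ l : Fin b, coeff (k + l + 1) (A i j) * x (j, l) := by
    have hdegree : (ofCoeffs x j).degree < b := Polynomial.ofFn_degree_lt _
    rw [mul_comm, coeff_polyF_mul, ← Polynomial.sum_fin _ (fun _ => by rw [zero_mul])
      hdegree]
    refine Finset.sum_congr rfl fun l _ => ?_
    rw [ofCoeffs_coeff, mul_comm, add_right_comm]
  simp only [Matrix.mulVec, dotProduct, map_sum, hentry, Fintype.sum_prod_type]
  rfl

variable [Fintype K]

local notation "q" => (Fintype.card K : ℝ)

variable (K) in
lemma one_lt_q : 1 < q := by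
  exact_mod_cast Fintype.one_lt_card (α := K)

variable (K) in
lemma q_pos : 0 < q := zero_lt_one.trans (one_lt_q K)

lemma fnorm_of_ne_zero {x : FF K} (hx : x ≠ 0) : fnorm x = q ^ (-(toL x).order) :=
  if_neg hx

lemma fnorm_mul (x y : FF K) : fnorm (x * y) = fnorm x * fnorm y := by
  by_cases hx : x = 0
  · rw [hx, zero_mul, fnorm_eq_zero.2 rfl, zero_mul]
  by_cases hy : y = 0
  · rw [hy, mul_zero, fnorm_eq_zero.2 rfl, mul_zero]
  have horder : (toL (x * y)).order = (toL x).order + (toL y).order :=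
    HahnSeries.order_mul (x := toL x) (y := toL y) hx hy
  rw [fnorm_of_ne_zero hx, fnorm_of_ne_zero hy, fnorm_of_ne_zero (mul_ne_zero hx hy),
    ← zpow_add₀ (q_pos K).ne', horder, neg_add]

/-- The norm of `𝔽_q((z⁻¹))` as a multiplicative norm, compatible with the metric above. -/
instance : NormedField (FF K) :=
  { (inferInstance : Field (FF K)), (inferInstance : MetricSpace (FF K)) with
    norm := fnorm
    dist_eq := fun x y => by
      change fnorm (x - y) = fnorm (-x + y)
      rw [← fnorm_neg, neg_sub, sub_eq_neg_add]
    norm_mul := fnorm_mul }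

lemma norm_def (x : FF K) : ‖x‖ = fnorm x := rfl

instance : IsUltrametricDist (FF K) :=
  IsUltrametricDist.isUltrametricDist_of_forall_norm_add_le_max_norm fnorm_add_le

lemma vnorm_eq_norm {ι : Type*} [Fintype ι] (v : ι → FF K) : vnorm v = ‖v‖ :=
  le_antisymm (Real.iSup_le (norm_le_pi_norm v) (norm_nonneg v))
    ((pi_norm_le_iff_of_nonneg (Real.iSup_nonneg fun i => norm_nonneg (v i))).2
      (le_ciSup (f := fun i => ‖v i‖) (Set.finite_range _).bddAbove))

lemma norm_lt_zpow_neg_iff {x : FF K} {k : ℤ} :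
    ‖x‖ < q ^ (-k) ↔ ∀ j ≤ k, coeff j x = 0 := by
  by_cases hx : x = 0
  · simp [hx, zpow_pos (q_pos K)]
  calc ‖x‖ < q ^ (-k) ↔ q ^ (-(toL x).order) < q ^ (-k) := by
        rw [norm_def, fnorm_of_ne_zero hx]
    _ ↔ k + 1 ≤ (toL x).order := by
        rw [zpow_lt_zpow_iff_right₀ (one_lt_q K), neg_lt_neg_iff, Int.add_one_le_iff]
    _ ↔ ∀ j ≤ k, coeff j x = 0 := by
        rw [HahnSeries.le_order_iff_forall (show toL x ≠ 0 from hx)]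
        simp only [Int.lt_add_one_iff]
        rfl

lemma norm_lt_zpow_add_one_iff {x : FF K} {k : ℤ} : ‖x‖ < q ^ (k + 1) ↔ ‖x‖ ≤ q ^ k := by
  by_cases hx : x = 0
  · simp [hx, zpow_pos (q_pos K), zpow_nonneg (q_pos K).le]
  · rw [norm_def, fnorm_of_ne_zero hx, zpow_lt_zpow_iff_right₀ (one_lt_q K),
      zpow_le_zpow_iff_right₀ (one_lt_q K), Int.lt_add_one_iff]

lemma norm_polyF_X : ‖polyF (Polynomial.X : Polynomial K)‖ = q := by
  have hX : toL (polyF (Polynomial.X : Polynomial K)) = HahnSeries.single (-1 : ℤ) 1 :=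
    toL_polyF_monomial 1 1
  rw [norm_def, fnorm, hX, HahnSeries.order_single one_ne_zero]
  simp

lemma norm_polyF_lt_pow_iff {P : Polynomial K} {b : ℕ} : ‖polyF P‖ < q ^ b ↔ P.degree < b := by
  have h := norm_lt_zpow_neg_iff (x := polyF P) (k := -b)
  rw [neg_neg, zpow_natCast] at h
  rw [h, Polynomial.degree_lt_iff_coeff_zero]
  constructor
  · intro hP l hl
    rw [← coeff_neg_polyF, hP _ (by omega)]
  · intro hP j hj
    obtain ⟨l, rfl⟩ : ∃ l : ℕ, j = -l := ⟨j.natAbs, by omega⟩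
    rw [coeff_neg_polyF, hP l (by omega)]

lemma one_le_norm_polyF {P : Polynomial K} (hP : P ≠ 0) : 1 ≤ ‖polyF P‖ := by
  contrapose! hP
  have hdegree : P.degree < (0 : ℕ) := norm_polyF_lt_pow_iff.1 (by rwa [pow_zero])
  exact Polynomial.degree_eq_bot.1 (Nat.WithBot.lt_zero_iff.1 hdegree)

lemma vnorm_nonneg {ι : Type*} [Fintype ι] (v : ι → FF K) : 0 ≤ vnorm v :=
  vnorm_eq_norm v ▸ norm_nonneg v

lemma pnorm_eq_norm {ι : Type*} [Fintype ι] (x : ι → Polynomial K) :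
    pnorm x = ‖fun i => (polyF (x i) : FF K)‖ := vnorm_eq_norm _

lemma pnorm_nonneg {ι : Type*} [Fintype ι] (x : ι → Polynomial K) : 0 ≤ pnorm x :=
  vnorm_nonneg _

lemma pnorm_lt_pow_succ_iff {ι : Type*} [Fintype ι] {x : ι → Polynomial K} {b : ℕ} :
    pnorm x < q ^ (b + 1) ↔ pnorm x ≤ q ^ b := by
  have := q_pos K
  rw [pnorm_eq_norm, pi_norm_lt_iff (by positivity), pi_norm_le_iff_of_nonneg (by positivity)]
  exact_mod_cast forall_congr' fun i => norm_lt_zpow_add_one_iff (x := polyF (x i)) (k := b)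

/-! ### Distance to the nearest polynomial -/

lemma sdist_le (x : FF K) (P : Polynomial K) : sdist x ≤ ‖x - polyF P‖ :=
  ciInf_le ⟨0, Set.forall_mem_range.2 fun _ => fnorm_nonneg _⟩ P

lemma sdist_lt_iff {x : FF K} {r : ℝ} : sdist x < r ↔ ∃ P, ‖x - polyF P‖ < r :=
  ⟨exists_lt_of_ciInf_lt, fun ⟨P, hP⟩ => (sdist_le x P).trans_lt hP⟩

lemma sdist_nonneg (x : FF K) : 0 ≤ sdist x := Real.iInf_nonneg fun _ => fnorm_nonneg _

lemma sdist_le_norm (x : FF K) : sdist x ≤ ‖x‖ := by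
  simpa only [polyF_zero, sub_zero] using sdist_le x 0

lemma sdist_eq_norm {x : FF K} (hx : ‖x‖ < 1) : sdist x = ‖x‖ := by
  refine (sdist_le_norm x).antisymm (le_ciInf fun P => ?_)
  change ‖x‖ ≤ ‖x - polyF P‖
  by_cases hP : P = 0
  · rw [hP, polyF_zero, sub_zero]
  · have hlt := hx.trans_le (one_le_norm_polyF hP)
    have hne : ‖x‖ ≠ ‖-polyF P‖ := (norm_neg (polyF P)).symm ▸ hlt.ne
    rw [sub_eq_add_neg, IsUltrametricDist.norm_add_eq_max_of_norm_ne_norm hne]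
    exact le_max_left _ _

lemma sdist_lt_inv_pow_iff {x : FF K} {b : ℕ} :
    sdist x < (q ^ b)⁻¹ ↔ ∀ k < b, coeff (k + 1) x = 0 := by
  have hcoeff (P : Polynomial K) :
      ‖x - polyF P‖ < (q ^ b)⁻¹ ↔ ∀ j ≤ (b : ℤ), coeff j x = coeff j (polyF P) := by
    simp only [← zpow_natCast, ← zpow_neg, norm_lt_zpow_neg_iff, map_sub, sub_eq_zero]
  simp only [sdist_lt_iff, hcoeff]
  constructor
  · rintro ⟨P, hP⟩ k hk
    rw [hP _ (by omega), coeff_polyF_of_pos (by omega)]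
  · refine fun hx => ⟨intPoly x, fun j _ => ?_⟩
    rcases le_or_gt j 0 with hj | hj
    · exact (coeff_polyF_intPoly hj x).symm
    · obtain ⟨k, rfl⟩ : ∃ k : ℕ, j = k + 1 := ⟨(j - 1).toNat, by omega⟩
      rw [hx k (by omega), coeff_polyF_of_pos hj]

lemma sdist_lt_one (x : FF K) : sdist x < 1 := by
  simpa using sdist_lt_inv_pow_iff (x := x) (b := 0)

lemma sdist_sub_le_max (x y : FF K) : sdist (x - y) ≤ max (sdist x) (sdist y) := by
  refine le_of_forall_gt_imp_ge_of_dense fun r hr => ?_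
  obtain ⟨P, hP⟩ := sdist_lt_iff.1 ((le_max_left _ _).trans_lt hr)
  obtain ⟨Q, hQ⟩ := sdist_lt_iff.1 ((le_max_right _ _).trans_lt hr)
  calc sdist (x - y) ≤ ‖x - y - polyF (P - Q)‖ := sdist_le _ _
    _ = ‖(x - polyF P) - (y - polyF Q)‖ := by rw [polyF_sub, sub_sub_sub_comm]
    _ ≤ max ‖x - polyF P‖ ‖y - polyF Q‖ := by
      simpa only [sub_eq_add_neg, norm_neg] using
        IsUltrametricDist.norm_add_le_max (x - polyF P) (-(y - polyF Q))
    _ ≤ r := (max_lt hP hQ).le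

lemma sdist_neg (x : FF K) : sdist (-x) = sdist x := by
  have hle (y : FF K) : sdist (-y) ≤ sdist y := by
    simpa [sdist_eq_norm, sdist_nonneg] using sdist_sub_le_max 0 y
  exact (hle x).antisymm (by simpa using hle (-x))

lemma sdist_add_le_max (x y : FF K) : sdist (x + y) ≤ max (sdist x) (sdist y) := by
  simpa only [sub_neg_eq_add, sdist_neg] using sdist_sub_le_max x (-y)

lemma sdist_polyF_mul_le (P : Polynomial K) (x : FF K) :
    sdist (polyF P * x) ≤ ‖polyF P‖ * sdist x := by
  rw [sdist.eq_1 x, Real.mul_iInf_of_nonneg (norm_nonneg _)]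
  refine le_ciInf fun Q => (sdist_le _ (P * Q)).trans_eq ?_
  rw [polyF_mul, ← mul_sub, norm_mul]
  rfl

lemma continuous_sdist : Continuous (sdist : FF K → ℝ) := by
  refine (LipschitzWith.of_le_add fun x y => ?_).continuous
  calc sdist x = sdist (y + (x - y)) := by rw [add_sub_cancel]
    _ ≤ max (sdist y) (sdist (x - y)) := sdist_add_le_max _ _
    _ ≤ sdist y + sdist (x - y) := max_le_add_of_nonneg (sdist_nonneg _) (sdist_nonneg _)
    _ ≤ sdist y + dist x y := by gcongr; exact sdist_le_norm _

lemma vdist_lt_iff {ι : Type*} [Fintype ι] {v : ι → FF K} {r : ℝ} (hr : 0 < r) :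
    vdist v < r ↔ ∀ i, sdist (v i) < r := by
  have hnorm (y : ι → Polynomial K) : vnorm (fun i => v i - polyF (y i)) < r ↔
      ∀ i, ‖v i - polyF (y i)‖ < r := by
    rw [vnorm_eq_norm, pi_norm_lt_iff hr]
  simp only [sdist_lt_iff]
  constructor
  · intro hv
    obtain ⟨y, hy⟩ := exists_lt_of_ciInf_lt hv
    exact fun i => ⟨y i, (hnorm y).1 hy i⟩
  · intro hv
    choose y hy using hv
    refine (ciInf_le ⟨0, ?_⟩ y).trans_lt ((hnorm y).2 hy)
    exact Set.forall_mem_range.2 fun _ => vnorm_nonneg _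

lemma vdist_lt_inv_pow_iff {ι : Type*} [Fintype ι] {v : ι → FF K} {b : ℕ} :
    vdist v < (q ^ b)⁻¹ ↔ ∀ i, ∀ k : Fin b, coeff (k + 1) (v i) = 0 := by
  simp only [vdist_lt_iff (inv_pos.2 (pow_pos (q_pos K) b)), sdist_lt_inv_pow_iff, Fin.forall_iff]

lemma vdist_nonneg {ι : Type*} [Fintype ι] (v : ι → FF K) : 0 ≤ vdist v :=
  Real.iInf_nonneg fun _ => vnorm_nonneg _

lemma sdist_le_vdist {ι : Type*} [Fintype ι] (v : ι → FF K) (i : ι) : sdist (v i) ≤ vdist v :=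
  le_of_forall_gt_imp_ge_of_dense fun _ hr =>
    ((vdist_lt_iff ((vdist_nonneg v).trans_lt hr)).1 hr i).le

lemma sdist_dotProduct_le {ι : Type*} [Fintype ι] (x : ι → Polynomial K) (v : ι → FF K) :
    sdist ((fun i => polyF (x i)) ⬝ᵥ v) ≤ pnorm x * vdist v := by
  refine Finset.sum_induction _ (fun u => sdist u ≤ pnorm x * vdist v) ?_ ?_ fun i _ => ?_
  · exact fun u w hu hw => (sdist_add_le_max u w).trans (max_le hu hw)
  · exact (sdist_le_norm 0).trans
      (norm_zero.trans_le (mul_nonneg (pnorm_nonneg x) (vdist_nonneg v)))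
  · calc sdist (polyF (x i) * v i) ≤ ‖polyF (x i)‖ * sdist (v i) := sdist_polyF_mul_le _ _
      _ ≤ pnorm x * vdist v := by
        rw [pnorm_eq_norm]
        gcongr
        · exact sdist_nonneg _
        · exact norm_le_pi_norm (fun i => (polyF (x i) : FF K)) i
        · exact sdist_le_vdist v i

lemma sdist_dotProduct_le_max {ι κ : Type*} [Fintype ι] [Fintype κ] (A : Matrix ι κ (FF K))
    (θ : ι → FF K) (x : κ → Polynomial K) (y : ι → Polynomial K) :
    sdist ((fun i => polyF (y i)) ⬝ᵥ θ) ≤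
      max (pnorm x * vdist (A.transpose.mulVec fun i => polyF (y i)))
        (pnorm y * vdist (A.mulVec (fun j => polyF (x j)) - θ)) := by
  have hpairing : (fun i => polyF (y i)) ⬝ᵥ θ =
      (fun j => polyF (x j)) ⬝ᵥ A.transpose.mulVec (fun i => polyF (y i)) -
        (fun i => polyF (y i)) ⬝ᵥ (A.mulVec (fun j => polyF (x j)) - θ) := by
    rw [dotProduct_sub, Matrix.dotProduct_mulVec, Matrix.vecMul_transpose,
      dotProduct_comm (A.mulVec _), sub_sub_cancel]
  rw [hpairing]
  exact (sdist_sub_le_max _ _).trans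
    (max_le_max (sdist_dotProduct_le _ _) (sdist_dotProduct_le _ _))

lemma denseRange_polyF_div_X_pow :
    DenseRange fun a : Polynomial K × ℕ => polyF a.1 / (polyF Polynomial.X : FF K) ^ a.2 := by
  refine Metric.denseRange_iff.2 fun x r hr => ?_
  obtain ⟨n, hn⟩ := exists_pow_lt_of_lt_one hr (inv_lt_one_of_one_lt₀ (one_lt_q K))
  set Z : FF K := polyF Polynomial.X ^ n with hZ
  have hZ_ne : Z ≠ 0 := pow_ne_zero n polyF_X_ne_zero
  have hZ_norm : ‖Z‖⁻¹ < r := by rwa [hZ, norm_pow, norm_polyF_X, ← inv_pow]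
  obtain ⟨P, hP⟩ := sdist_lt_iff.1 (sdist_lt_one (x * Z))
  refine ⟨(P, n), ?_⟩
  calc dist x (polyF P / Z) = ‖x * Z - polyF P‖ * ‖Z‖⁻¹ := by
        rw [dist_eq_norm, ← norm_inv, ← norm_mul, sub_mul, mul_inv_cancel_right₀ hZ_ne,
          div_eq_mul_inv]
    _ ≤ 1 * ‖Z‖⁻¹ := by gcongr
    _ < r := by rwa [one_mul]

instance : SecondCountableTopology (FF K) :=
  have : TopologicalSpace.SeparableSpace (FF K) := .of_denseRange _ denseRange_polyF_div_X_pow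
  UniformSpace.secondCountable_of_separable (FF K)

/-! ### Duality -/

lemma pnorm_ofCoeffs_lt {κ : Type*} [Fintype κ] {b : ℕ} (x : κ × Fin b → K) :
    pnorm (ofCoeffs x) < q ^ b := by
  rw [pnorm_eq_norm, pi_norm_lt_iff (pow_pos (q_pos K) b)]
  exact fun j => norm_polyF_lt_pow_iff.2 (Polynomial.ofFn_degree_lt _)

lemma vdist_mulVec_ofCoeffs_sub_lt_iff {ι κ : Type*} [Fintype ι] [Fintype κ]
    (A : Matrix ι κ (FF K)) {a b : ℕ} (x : κ × Fin b → K) (θ : ι → FF K) :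
    vdist (A.mulVec (fun j => polyF (ofCoeffs x j)) - θ) < (q ^ a)⁻¹ ↔
      (hankel A a b).mulVec x = fun s => coeff (s.2 + 1) (θ s.1) := by
  simp only [vdist_lt_inv_pow_iff, funext_iff, Prod.forall, hankel_mulVec_apply, Pi.sub_apply,
    map_sub, sub_eq_zero]

lemma exists_vdist_sub_lt {ι κ : Type*} [Fintype ι] [Fintype κ] {A : Matrix ι κ (FF K)} {a b : ℕ}
    (hA : ∀ y : ι → Polynomial K, y ≠ 0 → pnorm y < q ^ a →
      (q ^ b)⁻¹ ≤ vdist (A.transpose.mulVec fun i => polyF (y i))) (θ : ι → FF K) :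
    ∃ x : κ → Polynomial K,
      vdist (A.mulVec (fun j => polyF (x j)) - θ) < (q ^ a)⁻¹ ∧ pnorm x < q ^ b := by
  have hsurjective : Function.Surjective (hankel A a b).mulVec := by
    refine mulVec_surjective_of_transpose_mulVec_eq_zero fun y hy => ?_
    contrapose! hy
    rw [hankel_transpose]
    have hvdist := (hA _ (ofCoeffs_ne_zero hy) (pnorm_ofCoeffs_lt y)).not_gt
    rw [← sub_zero (A.transpose.mulVec _), vdist_mulVec_ofCoeffs_sub_lt_iff] at hvdist
    simp only [Pi.zero_apply, map_zero] at hvdist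
    exact hvdist
  obtain ⟨x, hx⟩ := hsurjective fun s => coeff (s.2 + 1) (θ s.1)
  exact ⟨ofCoeffs x, (vdist_mulVec_ofCoeffs_sub_lt_iff A x θ).2 hx, pnorm_ofCoeffs_lt x⟩

theorem exists_vdist_sub_le {ι κ : Type*} [Fintype ι] [Fintype κ] {A : Matrix ι κ (FF K)}
    {Y X : ℝ} (hY : 1 ≤ Y) (hX : 1 ≤ X)
    (hA : ∀ y : ι → Polynomial K, y ≠ 0 → pnorm y ≤ Y →
      X⁻¹ < vdist (A.transpose.mulVec fun i => polyF (y i))) (θ : ι → FF K) :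
    ∃ x : κ → Polynomial K,
      vdist (A.mulVec (fun j => polyF (x j)) - θ) ≤ Y⁻¹ ∧ pnorm x ≤ X := by
  obtain ⟨a, ha, ha'⟩ := exists_nat_pow_near hY (one_lt_q K)
  obtain ⟨b, hb, hb'⟩ := exists_nat_pow_near hX (one_lt_q K)
  obtain ⟨x, hx, hx'⟩ := exists_vdist_sub_lt (a := a + 1) (b := b + 1) (fun y hy hy' =>
    (inv_anti₀ (by positivity) hb'.le).trans
      (hA y hy ((pnorm_lt_pow_succ_iff.1 hy').trans ha)).le) θ
  exact ⟨x, hx.le.trans (inv_anti₀ (by positivity) ha'.le), (pnorm_lt_pow_succ_iff.1 hx').trans hb⟩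

lemma solv_of_not_solvHom {m n : ℕ} {A : Matrix (Fin n) (Fin m) (FF K)} {ω H : ℝ} (hω : 0 < ω)
    (hH : 1 ≤ H) (hA : ¬SolvHom A.transpose ω H) (θ : Fin n → FF K) :
    Solv A θ ω⁻¹ (H ^ ω) := by
  have hH0 : 0 < H := zero_lt_one.trans_le hH
  rw [Solv, ← Real.rpow_mul hH0.le, mul_neg, mul_inv_cancel₀ hω.ne', Real.rpow_neg_one]
  refine exists_vdist_sub_le hH (Real.one_le_rpow hH hω.le) (fun y hy hy' => ?_) θ
  rw [← Real.rpow_neg hH0.le]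
  by_contra! hvdist
  exact hA ⟨y, hy, hvdist, hy'⟩

/-! ### Measure of a neighbourhood of a rational hyperplane -/

lemma norm_polyF_div_X_pow_lt_one {P : Polynomial K} {J : ℕ} (hP : P.degree < J) :
    ‖polyF P / (polyF Polynomial.X : FF K) ^ J‖ < 1 := by
  rw [norm_div, norm_pow, norm_polyF_X, div_lt_one (pow_pos (q_pos K) J)]
  exact norm_polyF_lt_pow_iff.2 hP

lemma eq_zero_of_sdist_polyF_div_X_pow_lt {P : Polynomial K} {J : ℕ} (hP : P.degree < J)
    (hsdist : sdist (polyF P / (polyF Polynomial.X : FF K) ^ J) < (q ^ J)⁻¹) : P = 0 := by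
  rw [sdist_eq_norm (norm_polyF_div_X_pow_lt_one hP), norm_div, norm_pow, norm_polyF_X,
    ← one_div, div_lt_div_iff_of_pos_right (pow_pos (q_pos K) J)] at hsdist
  exact not_imp_comm.1 one_le_norm_polyF hsdist.not_ge

lemma exists_dotProduct_polyF_eq {ι : Type*} [Fintype ι] {y : ι → Polynomial K} (hy : y ≠ 0)
    (f : FF K) : ∃ g : ι → FF K, ‖g‖ ≤ ‖f‖ ∧ (fun i => polyF (y i)) ⬝ᵥ g = f := by
  obtain ⟨i₀, hi₀⟩ : ∃ i₀, y i₀ ≠ 0 := Function.ne_iff.1 hy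
  have hnorm : 1 ≤ ‖polyF (y i₀)‖ := one_le_norm_polyF hi₀
  refine ⟨Pi.single i₀ ((polyF (y i₀))⁻¹ * f), ?_, ?_⟩
  · rw [Pi.norm_single, norm_mul, norm_inv]
    exact mul_le_of_le_one_left (norm_nonneg _) (inv_le_one_of_one_le₀ hnorm)
  · rw [dotProduct_single, mul_inv_cancel_left₀ (norm_pos_iff.1 (zero_lt_one.trans_le hnorm))]

open Metric in
lemma card_pow_mul_measure_ball_inter_le {ι : Type*} [Fintype ι] (μ : Measure (ι → FF K))
    [μ.IsAddLeftInvariant] (p : ι → FF K) {y : ι → Polynomial K} (hy : y ≠ 0) (J : ℕ) :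
    (Fintype.card K : ℝ≥0∞) ^ J *
      μ (ball p 1 ∩ {θ | sdist ((fun i => polyF (y i)) ⬝ᵥ θ) < (q ^ J)⁻¹}) ≤ μ (ball p 1) := by
  let f (w : Fin J → K) : FF K := polyF (Polynomial.ofFn J w) / polyF Polynomial.X ^ J
  choose g hg_norm hg_dot using fun w => exists_dotProduct_polyF_eq hy (f w)
  have hmeasurable : MeasurableSet
      (ball p 1 ∩ {θ | sdist ((fun i => polyF (y i)) ⬝ᵥ θ) < (q ^ J)⁻¹}) :=
    (isOpen_ball.inter (isOpen_lt (continuous_sdist.comp (by fun_prop))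
      continuous_const)).measurableSet
  have hsub (w : Fin J → K) : (g w + ·) ⁻¹' (ball p 1 ∩
      {θ | sdist ((fun i => polyF (y i)) ⬝ᵥ θ) < (q ^ J)⁻¹}) ⊆ ball p 1 := by
    refine fun θ hθ => (dist_triangle_max θ (g w + θ) p).trans_lt (max_lt ?_ hθ.1)
    rw [dist_add_self_right]
    exact (hg_norm w).trans_lt (norm_polyF_div_X_pow_lt_one (Polynomial.ofFn_degree_lt w))
  convert card_mul_measure_le_of_pairwise_disjoint μ hmeasurable hsub fun w w' hww' =>
    Set.disjoint_left.2 fun θ hθ hθ' => hww' ?_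
  · simp
  · have hsdist : sdist (f w - f w') < (q ^ J)⁻¹ := by
      rw [← add_sub_add_right_eq_sub (f w) (f w') ((fun i => polyF (y i)) ⬝ᵥ θ), ← hg_dot,
        ← hg_dot, ← dotProduct_add, ← dotProduct_add]
      exact (sdist_sub_le_max _ _).trans_lt (max_lt hθ.2 hθ'.2)
    have hdegree : (Polynomial.ofFn J w - Polynomial.ofFn J w').degree < J :=
      (Polynomial.degree_sub_le _ _).trans_lt
        (max_lt (Polynomial.ofFn_degree_lt w) (Polynomial.ofFn_degree_lt w'))
    rw [← sub_div, ← polyF_sub] at hsdist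
    exact Polynomial.injective_ofFn J
      (sub_eq_zero.1 (eq_zero_of_sdist_polyF_div_X_pow_lt hdegree hsdist))

lemma exists_sdist_lt_inv_pow {r : ℝ} (hr : 0 < r) :
    ∃ J : ℕ, (q ^ J)⁻¹ ≤ q * r ∧ ∀ x : FF K, sdist x < r → sdist x < (q ^ J)⁻¹ := by
  have hq := one_lt_q K
  rcases le_or_gt r 1 with hr1 | hr1
  · obtain ⟨J, hJ, hJ'⟩ := exists_nat_pow_near ((one_le_inv₀ hr).2 hr1) hq
    refine ⟨J, ?_, fun x hx => hx.trans_le ((le_inv_comm₀ (by positivity) hr).1 hJ)⟩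
    rw [pow_succ, inv_lt_iff_one_lt_mul₀ hr] at hJ'
    rw [inv_le_iff_one_le_mul₀ (by positivity)]
    linarith
  · refine ⟨0, ?_, fun x _ => by simpa using sdist_lt_one x⟩
    rw [pow_zero, inv_one]
    exact one_le_mul_of_one_le_of_one_le hq.le hr1.le

open Metric in
lemma measure_ball_inter_sdist_lt_le {ι : Type*} [Fintype ι] (μ : Measure (ι → FF K))
    [μ.IsAddLeftInvariant] (p : ι → FF K) {y : ι → Polynomial K} (hy : y ≠ 0) {r : ℝ}
    (hr : 0 < r) :
    μ (ball p 1 ∩ {θ | sdist ((fun i => polyF (y i)) ⬝ᵥ θ) < r}) ≤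
      ENNReal.ofReal (q * r) * μ (ball p 1) := by
  obtain ⟨J, hJ, hsdist⟩ := exists_sdist_lt_inv_pow (K := K) hr
  have hcard : ((Fintype.card K : ℝ≥0∞) ^ J)⁻¹ = ENNReal.ofReal (q ^ J)⁻¹ := by
    rw [ENNReal.ofReal_inv_of_pos (pow_pos (q_pos K) J), ENNReal.ofReal_pow (q_pos K).le,
      ENNReal.ofReal_natCast]
  calc μ (ball p 1 ∩ {θ | sdist ((fun i => polyF (y i)) ⬝ᵥ θ) < r})
      ≤ μ (ball p 1 ∩ {θ | sdist ((fun i => polyF (y i)) ⬝ᵥ θ) < (q ^ J)⁻¹}) :=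
        measure_mono (Set.inter_subset_inter_right _ fun θ => hsdist _)
    _ ≤ ((Fintype.card K : ℝ≥0∞) ^ J)⁻¹ * μ (ball p 1) := by
        refine (ENNReal.mul_le_iff_le_inv (by simp) (by simp)).1 ?_
        exact card_pow_mul_measure_ball_inter_le μ p hy J
    _ ≤ ENNReal.ofReal (q * r) * μ (ball p 1) := by
        rw [hcard]
        gcongr

/-! ### Almost every target -/

section

variable {m n : ℕ} {A : Matrix (Fin n) (Fin m) (FF K)} {ω τ t : ℝ}

lemma sdist_dotProduct_lt_of_solv {θ : Fin n → FF K} {δ Y u : ℝ} {y : Fin n → Polynomial K}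
    (ht : 0 < t) (hδω : δ ≤ ω - t) (hδτ : δ ≤ t * τ - 1) (hτ : 0 ≤ τ) (hY : 1 ≤ Y)
    (hu : u ∈ Set.Ico Y (q * Y)) (hy : pnorm y ≤ Y)
    (hyA : vdist (A.transpose.mulVec fun i => polyF (y i)) ≤ Y ^ (-ω))
    (hsolv : Solv A θ τ (u ^ t)) :
    sdist ((fun i => polyF (y i)) ⬝ᵥ θ) < q ^ t * Y ^ (-δ) := by
  obtain ⟨x, hxA, hx⟩ := hsolv
  have hq := q_pos K
  have hY0 : 0 < Y := zero_lt_one.trans_le hY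
  have hu0 : 0 < u := hY0.trans_le hu.1
  refine (sdist_dotProduct_le_max A θ x y).trans_lt (max_lt ?_ ?_)
  · calc pnorm x * vdist (A.transpose.mulVec fun i => polyF (y i))
        ≤ u ^ t * Y ^ (-ω) := mul_le_mul hx hyA (vdist_nonneg _) (by positivity)
      _ < (q * Y) ^ t * Y ^ (-ω) := by
          gcongr
          exact hu.2
      _ = q ^ t * Y ^ (t - ω) := by
          rw [Real.mul_rpow hq.le hY0.le, mul_assoc, ← Real.rpow_add hY0, sub_eq_add_neg]
      _ ≤ q ^ t * Y ^ (-δ) := by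
          gcongr q ^ t * ?_
          exact Real.rpow_le_rpow_of_exponent_le hY (by linarith)
  · calc pnorm y * vdist (A.mulVec (fun j => polyF (x j)) - θ)
        ≤ Y * (u ^ t) ^ (-τ) := mul_le_mul hy hxA (vdist_nonneg _) hY0.le
      _ ≤ Y * (Y ^ t) ^ (-τ) := by
          gcongr Y * ?_
          exact Real.rpow_le_rpow_of_nonpos (by positivity)
            (Real.rpow_le_rpow hY0.le hu.1 ht.le) (neg_nonpos.2 hτ)
      _ = Y ^ (1 - t * τ) := by
          rw [← Real.rpow_mul hY0.le, mul_neg, sub_eq_add_neg, Real.rpow_add hY0, Real.rpow_one]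
      _ ≤ Y ^ (-δ) := Real.rpow_le_rpow_of_exponent_le hY (by linarith)
      _ < q ^ t * Y ^ (-δ) := lt_mul_of_one_lt_left (by positivity)
          (Real.one_lt_rpow (one_lt_q K) ht)

open Metric in
lemma measure_ball_inter_solv_le (μ : Measure (Fin n → FF K)) [μ.IsAddLeftInvariant] {δ Y : ℝ}
    (ht : 0 < t) (hδω : δ ≤ ω - t) (hδτ : δ ≤ t * τ - 1) (hτ : 0 ≤ τ) (hY : 1 ≤ Y)
    (hsolvHom : SolvHom A.transpose ω Y) (p : Fin n → FF K) :
    μ (ball p 1 ∩ {θ | ∃ u ∈ Set.Ico Y (q * Y), Solv A θ τ (u ^ t)}) ≤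
      ENNReal.ofReal (q * (q ^ t * Y ^ (-δ))) * μ (ball 0 1) := by
  obtain ⟨y, hy, hyA, hyY⟩ := hsolvHom
  have hr : 0 < q ^ t * Y ^ (-δ) := by
    have := q_pos K
    have := zero_lt_one.trans_le hY
    positivity
  rw [← measure_ball_eq_measure_ball_zero μ p]
  refine (measure_mono (Set.inter_subset_inter_right _ ?_)).trans
    (measure_ball_inter_sdist_lt_le μ p hy hr)
  rintro θ ⟨u, hu, hsolv⟩
  exact sdist_dotProduct_lt_of_solv ht hδω hδτ hτ hY hu hyY hyA hsolv

lemma ae_eventually_forall_not_solv (μ : Measure (Fin n → FF K)) [μ.IsAddLeftInvariant]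
    (hμ : μ (Metric.ball 0 1) ≠ ∞) (ht : 0 < t) (htω : t < ω) (hτ : 0 ≤ τ) (htτ : 1 < t * τ)
    {Y : ℕ → ℝ} (hY : ∀ k, q ^ k ≤ Y k) :
    ∀ᵐ θ ∂μ, ∀ᶠ k in atTop, SolvHom A.transpose ω (Y k) →
      ∀ u ∈ Set.Ico (Y k) (q * Y k), ¬Solv A θ τ (u ^ t) := by
  set δ := min (ω - t) (t * τ - 1)
  have hδ0 : 0 < δ := lt_min (sub_pos.2 htω) (sub_pos.2 htτ)
  have hsummable : Summable fun k => q * (q ^ t * Y k ^ (-δ)) :=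
    ((summable_rpow_neg_of_pow_le (one_lt_q K) hδ0 hY).mul_left _).mul_left _
  have hae : ∀ᵐ θ ∂μ, ∀ᶠ k in atTop, θ ∉ {θ | SolvHom A.transpose ω (Y k) ∧
      ∃ u ∈ Set.Ico (Y k) (q * Y k), Solv A θ τ (u ^ t)} := by
    refine ae_eventually_notMem_of_tsum_measure_ball_inter_ne_top zero_lt_one fun p => ?_
    refine ne_top_of_le_ne_top (ENNReal.mul_ne_top hsummable.tsum_ofReal_ne_top hμ) ?_
    rw [← ENNReal.tsum_mul_right]
    refine ENNReal.tsum_le_tsum fun k => ?_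
    by_cases hsolvHom : SolvHom A.transpose ω (Y k)
    · simp only [hsolvHom, true_and]
      exact measure_ball_inter_solv_le μ ht (min_le_left _ _) (min_le_right _ _) hτ
        ((one_le_pow₀ (one_lt_q K).le).trans (hY k)) hsolvHom p
    · simp [hsolvHom]
  filter_upwards [hae] with θ hθ
  exact hθ.mono fun k hk hsolvHom u hu hsolv => hk ⟨hsolvHom, u, hu, hsolv⟩

lemma exists_between_of_inv_lt (hτ : 0 < τ) (hωτ : τ⁻¹ < ω) :
    ∃ t, 0 < t ∧ t < ω ∧ 1 < t * τ := by
  obtain ⟨t, hτt, htω⟩ := exists_between hωτ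
  exact ⟨t, (inv_pos.2 hτ).trans hτt, htω, (inv_lt_iff_one_lt_mul₀ hτ).1 hτt⟩

lemma ae_eventually_not_solv (μ : Measure (Fin n → FF K)) [μ.IsAddLeftInvariant]
    (hμ : μ (Metric.ball 0 1) ≠ ∞) (hτ : 0 < τ) (hωτ : τ⁻¹ < ω)
    (hsolvHom : ∀ᶠ H in atTop, SolvHom A.transpose ω H) :
    ∀ᵐ θ ∂μ, ∀ᶠ H in atTop, ¬Solv A θ τ H := by
  have hq := one_lt_q K
  obtain ⟨t, ht, htω, htτ⟩ := exists_between_of_inv_lt hτ hωτ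
  filter_upwards [ae_eventually_forall_not_solv (A := A) μ hμ ht htω hτ.le htτ fun k => le_rfl]
    with θ hθ
  obtain ⟨N, hN⟩ := eventually_atTop.1
    (hθ.and ((tendsto_pow_atTop_atTop_of_one_lt hq).eventually hsolvHom))
  filter_upwards [eventually_ge_atTop 1,
    (tendsto_rpow_atTop (inv_pos.2 ht)).eventually_ge_atTop (q ^ N)] with H hH hHN
  obtain ⟨k, hk, hk'⟩ := exists_nat_pow_near (Real.one_le_rpow hH (inv_pos.2 ht).le) hq
  have hNk : N ≤ k := Nat.lt_succ_iff.1 ((pow_lt_pow_iff_right₀ hq).1 (hHN.trans_lt hk'))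
  rw [← Real.rpow_inv_rpow (zero_le_one.trans hH) ht.ne']
  exact (hN k hNk).1 (hN k hNk).2 _ ⟨hk, by rwa [← pow_succ']⟩

lemma ae_frequently_not_solv (μ : Measure (Fin n → FF K)) [μ.IsAddLeftInvariant]
    (hμ : μ (Metric.ball 0 1) ≠ ∞) (hτ : 0 < τ) (hωτ : τ⁻¹ < ω)
    (hsolvHom : ∃ᶠ H in atTop, SolvHom A.transpose ω H) :
    ∀ᵐ θ ∂μ, ∃ᶠ H in atTop, ¬Solv A θ τ H := by
  have hq := one_lt_q K
  obtain ⟨t, ht, htω, htτ⟩ := exists_between_of_inv_lt hτ hωτ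
  choose Y hY hYsolvHom using fun k : ℕ => frequently_atTop.1 hsolvHom (q ^ k)
  have hY0 (k : ℕ) : 0 < Y k := (pow_pos (q_pos K) k).trans_le (hY k)
  have htendsto : Tendsto (fun k => Y k ^ t) atTop atTop :=
    (tendsto_rpow_atTop ht).comp (tendsto_atTop_mono hY (tendsto_pow_atTop_atTop_of_one_lt hq))
  filter_upwards [ae_eventually_forall_not_solv (A := A) μ hμ ht htω hτ.le htτ hY] with θ hθ
  exact htendsto.frequently (hθ.mono fun k hk =>
    hk (hYsolvHom k) (Y k) ⟨le_rfl, lt_mul_of_one_lt_left (hY0 k) hq⟩).frequently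

end

/-! ### Exponents -/

section

variable {m n : ℕ} (A : Matrix (Fin n) (Fin m) (FF K)) (θ : Fin n → FF K)

lemma omegaInhom_eq_exponent :
    omegaInhom A θ = exponent fun ω => ∃ᶠ H in atTop, Solv A θ ω H := by
  simp only [omegaInhom, exponent, frequently_atTop]

lemma omegaHatInhom_eq_exponent :
    omegaHatInhom A θ = exponent fun ω => ∀ᶠ H in atTop, Solv A θ ω H := by
  simp only [omegaHatInhom, exponent, eventually_atTop]

lemma omegaHom_eq_exponent :
    omegaHom A = exponent fun ω => ∃ᶠ H in atTop, SolvHom A ω H := by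
  simp only [omegaHom, exponent, frequently_atTop]

lemma omegaHatHom_eq_exponent :
    omegaHatHom A = exponent fun ω => ∀ᶠ H in atTop, SolvHom A ω H := by
  simp only [omegaHatHom, exponent, eventually_atTop]

lemma antitone_solv {H : ℝ} (hH : 1 ≤ H) : Antitone fun ω => Solv A θ ω H :=
  fun _ _ hω ⟨x, hxA, hx⟩ =>
    ⟨x, hxA.trans (Real.rpow_le_rpow_of_exponent_le hH (neg_le_neg hω)), hx⟩

lemma inv_omegaHatHom_transpose_le_omegaInhom :
    (omegaHatHom A.transpose)⁻¹ ≤ omegaInhom A θ := by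
  rw [omegaHatHom_eq_exponent, omegaInhom_eq_exponent]
  refine inv_exponent_le fun ω hω hsolvHom => (tendsto_rpow_atTop hω).frequently ?_
  exact ((not_eventually.1 hsolvHom).and_eventually (eventually_ge_atTop 1)).mono
    fun H hH => solv_of_not_solvHom hω hH.2 hH.1 θ

lemma inv_omegaHom_transpose_le_omegaHatInhom :
    (omegaHom A.transpose)⁻¹ ≤ omegaHatInhom A θ := by
  rw [omegaHom_eq_exponent, omegaHatInhom_eq_exponent]
  refine inv_exponent_le fun ω hω hsolvHom => ?_
  filter_upwards [eventually_ge_atTop 1,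
    (tendsto_rpow_atTop (inv_pos.2 hω)).eventually (not_frequently.1 hsolvHom)] with H hH hH'
  rw [← Real.rpow_inv_rpow (zero_le_one.trans hH) hω.ne']
  exact solv_of_not_solvHom hω (Real.one_le_rpow hH (inv_pos.2 hω).le) hH' θ

variable (μ : Measure (Fin n → FF K)) [μ.IsAddLeftInvariant]

lemma ae_omegaInhom_le (hμ : μ (Metric.ball 0 1) ≠ ∞) :
    ∀ᵐ θ ∂μ, omegaInhom A θ ≤ (omegaHatHom A.transpose)⁻¹ := by
  simp only [omegaInhom_eq_exponent, omegaHatHom_eq_exponent]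
  refine ae_exponent_le_inv_exponent (fun θ ω ω' hω hsolv => ?_) fun ω τ hτ hωτ hsolvHom => ?_
  · exact (hsolv.and_eventually (eventually_ge_atTop 1)).mono
      fun H hH => antitone_solv A θ hH.2 hω hH.1
  · filter_upwards [ae_eventually_not_solv μ hμ hτ hωτ hsolvHom] with θ hθ
    exact not_frequently.2 hθ

lemma ae_omegaHatInhom_le (hμ : μ (Metric.ball 0 1) ≠ ∞) :
    ∀ᵐ θ ∂μ, omegaHatInhom A θ ≤ (omegaHom A.transpose)⁻¹ := by
  simp only [omegaHatInhom_eq_exponent, omegaHom_eq_exponent]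
  refine ae_exponent_le_inv_exponent (fun θ ω ω' hω hsolv => ?_) fun ω τ hτ hωτ hsolvHom => ?_
  · exact (hsolv.and (eventually_ge_atTop 1)).mono
      fun H hH => antitone_solv A θ hH.2 hω hH.1
  · filter_upwards [ae_frequently_not_solv μ hμ hτ hωτ hsolvHom] with θ hθ
    exact not_eventually.2 hθ

end

lemma setOf_forall_fnorm_lt_one {ι : Type*} [Fintype ι] :
    {θ : ι → FF K | ∀ i, fnorm (θ i) < 1} = Metric.ball 0 1 := by
  ext θ
  rw [mem_ball_zero_iff, pi_norm_lt_iff zero_lt_one]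
  rfl

end

end FPSDA

theorem exponent_equalities_ae_general {K : Type*} [Field K] [Fintype K] {m n : ℕ}
    (A : Matrix (Fin n) (Fin m) (FF K)) (μ : Measure (Fin n → FF K)) [μ.IsAddLeftInvariant]
    (hμ : μ {θ : Fin n → FF K | ∀ i, fnorm (θ i) < 1} ≠ ∞) :
    ∀ᵐ θ ∂μ, omegaInhom A θ = (omegaHatHom A.transpose)⁻¹ ∧
      omegaHatInhom A θ = (omegaHom A.transpose)⁻¹ := by
  rw [setOf_forall_fnorm_lt_one] at hμ
  filter_upwards [ae_omegaInhom_le A μ hμ, ae_omegaHatInhom_le A μ hμ] with θ hω hωHat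
  exact ⟨hω.antisymm (inv_omegaHatHom_transpose_le_omegaInhom A θ),
    hωHat.antisymm (inv_omegaHom_transpose_le_omegaHatInhom A θ)⟩

/-- For a non-degenerate matrix `A`, the equalities `ω(A, θ) = 1 / ω̂(Aᵀ)` and
`ω̂(A, θ) = 1 / ω(Aᵀ)` hold for almost all `θ` with respect to the Haar measure on
`𝔽_q((z⁻¹))ⁿ` (formalized as: with respect to any translation-invariant Borel measure
giving measure `1` to the unit polydisc — such a measure is exactly a normalized Haar
measure). -/
theorem exponent_equalities_ae {K : Type*} [Field K] [Fintype K] {m n : ℕ}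
    (hm : 0 < m) (hn : 0 < n)
    (A : Matrix (Fin n) (Fin m) (FF K)) (hA : Nondegenerate A)
    (μ : Measure (Fin n → FF K))
    (hinv : ∀ a : Fin n → FF K, ∀ s : Set (Fin n → FF K), MeasurableSet s →
      μ ((fun θ => a + θ) ⁻¹' s) = μ s)
    (hone : μ {θ : Fin n → FF K | ∀ i, fnorm (θ i) < 1} = 1) :
    ∀ᵐ θ ∂μ, omegaInhom A θ = (omegaHatHom A.transpose)⁻¹ ∧
      omegaHatInhom A θ = (omegaHom A.transpose)⁻¹ := by
  have : μ.IsAddLeftInvariant :=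
    ⟨fun a => Measure.ext fun s hs => (Measure.map_apply (measurable_const_add a) hs).trans
      (hinv a s hs)⟩
  exact exponent_equalities_ae_general A μ (hone.trans_ne ENNReal.one_ne_top)
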